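/- arXiv:1712.04013 — 2 statements merged into one kernel-verified Lean document; each statement's English description precedes it below -/
import Mathlib

section
/- Let X be a measurable space and Q a weighted evolution operator on X satisfying the minorization condition with constant ε ∈ (0,1) and probability measure η. Then for all probability measures μ and ν on X and all n ∈ ℕ, ‖Φ_n(μ) − Φ_n(ν)‖_TV ≤ 2(1 − ε²)ⁿ. -/
open MeasureTheory ProbabilityTheory

/-- The action of a weighted evolution operator given by a kernel `κ`:
`(Qφ)(q) = ∫ φ(q') κ(q, dq')`. -/
noncomputable def evolOp {X : Type*} [MeasurableSpace X] (κ : Kernel X X) (φ : X → ℝ) : X → ℝ :=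
  fun q => ∫ q', φ q' ∂(κ q)

/-- Bounded measurable real-valued functions. -/
def BddMeas {X : Type*} [MeasurableSpace X] (φ : X → ℝ) : Prop :=
  Measurable φ ∧ ∃ C : ℝ, ∀ x, |φ x| ≤ C

/-- Minorization condition: `ε η(φ) ≤ (Qφ)(q) ≤ ε⁻¹ η(φ)` for all bounded measurable `φ ≥ 0`. -/
def Minorizes {X : Type*} [MeasurableSpace X] (Q : (X → ℝ) → (X → ℝ)) (ε : ℝ)
    (η : Measure X) : Prop :=
  ∀ φ : X → ℝ, BddMeas φ → (∀ x, 0 ≤ φ x) → ∀ q,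
    ε * ∫ x, φ x ∂η ≤ Q φ q ∧ Q φ q ≤ ε⁻¹ * ∫ x, φ x ∂η

/-- The discretized Feynman–Kac semigroup `Φ_n(μ)(φ) = μ(Qⁿφ)/μ(Qⁿ1)`. -/
noncomputable def FK {X : Type*} [MeasurableSpace X] (κ : Kernel X X) (μ : Measure X)
    (n : ℕ) (φ : X → ℝ) : ℝ :=
  (∫ q, (evolOp κ)^[n] φ q ∂μ) / (∫ q, (evolOp κ)^[n] (fun _ => (1:ℝ)) q ∂μ)

theorem BddMeas.integrable' {X : Type*} [MeasurableSpace X] {φ : X → ℝ} (h : BddMeas φ)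
    (μ : Measure X) [IsFiniteMeasure μ] : Integrable φ μ := by
  obtain ⟨hm, C, hC⟩ := h
  exact Integrable.of_bound hm.aestronglyMeasurable C (Filter.Eventually.of_forall hC)

theorem BddMeas.sub_smul' {X : Type*} [MeasurableSpace X] {f g : X → ℝ} (hf : BddMeas f)
    (hg : BddMeas g) (a b : ℝ) : BddMeas (fun x => a * f x + b * g x) := by
  obtain ⟨hm, C, hC⟩ := hf
  obtain ⟨hm', D, hD⟩ := hg
  refine ⟨(hm.const_mul a).add (hm'.const_mul b), |a| * C + |b| * D, fun x => ?_⟩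
  refine (abs_add_le _ _).trans ?_
  rw [abs_mul, abs_mul]
  exact add_le_add (mul_le_mul_of_nonneg_left (hC x) (abs_nonneg a))
    (mul_le_mul_of_nonneg_left (hD x) (abs_nonneg b))

theorem BddMeas.evol {X : Type*} [MeasurableSpace X] {κ : Kernel X X} [IsFiniteKernel κ]
    {ε : ℝ} {η : Measure X}
    (hmin : Minorizes (evolOp κ) ε η) {f : X → ℝ} (hf : BddMeas f) : BddMeas (evolOp κ f) := by
  refine ⟨?_, ε⁻¹ * ∫ x, |f x| ∂η, fun q => ?_⟩
  · have h : StronglyMeasurable f := hf.1.stronglyMeasurable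
    exact (h.integral_kernel (κ := κ)).measurable
  · have h : BddMeas (fun x => |f x|) := by
      obtain ⟨hm, C, hC⟩ := hf
      exact ⟨hm.abs, C, fun x => by rw [abs_abs]; exact hC x⟩
    exact (abs_integral_le_integral_abs).trans (hmin _ h (fun x => abs_nonneg _) q).2

theorem int_lin {X : Type*} [MeasurableSpace X] {f g : X → ℝ} (hf : BddMeas f)
    (hg : BddMeas g) (a b : ℝ) (μ : Measure X) [IsFiniteMeasure μ] :
    ∫ x, (a * f x + b * g x) ∂μ = a * ∫ x, f x ∂μ + b * ∫ x, g x ∂μ := by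
  rw [integral_add ((hf.integrable' μ).const_mul a) ((hg.integrable' μ).const_mul b),
    integral_const_mul, integral_const_mul]

theorem int_pos {X : Type*} [MeasurableSpace X] {h : X → ℝ} (hh : BddMeas h) {c : ℝ}
    (hc : ∀ x, c ≤ h x) (μ : Measure X) [IsProbabilityMeasure μ] : c ≤ ∫ x, h x ∂μ := by
  have := integral_mono (integrable_const c) (hh.integrable' μ) hc
  simpa using this

theorem fk_step {X : Type*} [MeasurableSpace X] (κ : Kernel X X) [IsFiniteKernel κ]
    (ε : ℝ) (hε : ε ∈ Set.Ioo (0:ℝ) 1) (η : Measure X) [IsProbabilityMeasure η]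
    (hmin : Minorizes (evolOp κ) ε η) {f h : X → ℝ} (hf : BddMeas f) (hh : BddMeas h)
    (c : ℝ) (hc : 0 < c) (hch : ∀ x, c ≤ h x) (a b : ℝ)
    (ha : ∀ x, a * h x ≤ f x) (hb : ∀ x, f x ≤ b * h x) :
    ∃ a' b' : ℝ, b' - a' = (1 - ε ^ 2) * (b - a) ∧
      ∀ x, a' * evolOp κ h x ≤ evolOp κ f x ∧ evolOp κ f x ≤ b' * evolOp κ h x := by
  obtain ⟨h0, h1⟩ := hε
  have hH : 0 < ∫ x, h x ∂η := hc.trans_le (int_pos hh hch η)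
  set H := ∫ x, h x ∂η with hHd
  set m := (∫ x, f x ∂η) / H with hm
  have hF : ∫ x, f x ∂η = m * H := by rw [hm]; field_simp
  have n1 : ∀ x, 0 ≤ 1 * f x + (-a) * h x := fun x => by linarith [ha x]
  have n2 : ∀ x, 0 ≤ b * h x + (-1) * f x := fun x => by linarith [hb x]
  have p1 : 0 ≤ m - a := by
    have : 0 ≤ ∫ x, (1 * f x + (-a) * h x) ∂η := integral_nonneg n1
    rw [int_lin hf hh, hF] at this
    by_contra hcon
    nlinarith
  have p2 : 0 ≤ b - m := by
    have : 0 ≤ ∫ x, (b * h x + (-1) * f x) ∂η := integral_nonneg n2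
    rw [int_lin hh hf, hF] at this
    by_contra hcon
    nlinarith
  refine ⟨a + ε ^ 2 * (m - a), b - ε ^ 2 * (b - m), by ring, fun x => ?_⟩
  have u := (hmin h hh (fun x => hc.le.trans (hch x)) x).2
  have u' : ε * evolOp κ h x ≤ H := by
    have := mul_le_mul_of_nonneg_left u h0.le
    rwa [← mul_assoc, mul_inv_cancel₀ h0.ne', one_mul] at this
  have l1 := (hmin _ (hf.sub_smul' hh 1 (-a)) n1 x).1
  have l2 := (hmin _ (hh.sub_smul' hf b (-1)) n2 x).1
  have e1 : evolOp κ (fun x => 1 * f x + (-a) * h x) x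
      = 1 * evolOp κ f x + (-a) * evolOp κ h x := int_lin hf hh _ _ _
  have e2 : evolOp κ (fun x => b * h x + (-1) * f x) x
      = b * evolOp κ h x + (-1) * evolOp κ f x := int_lin hh hf _ _ _
  rw [e1, int_lin hf hh, hF] at l1
  rw [e2, int_lin hh hf, hF] at l2
  have v1 := mul_le_mul_of_nonneg_left u' (mul_nonneg h0.le p1)
  have v2 := mul_le_mul_of_nonneg_left u' (mul_nonneg h0.le p2)
  constructor
  · linarith
  · linarith

theorem fk_iter {X : Type*} [MeasurableSpace X] (κ : Kernel X X) [IsFiniteKernel κ]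
    (ε : ℝ) (hε : ε ∈ Set.Ioo (0:ℝ) 1) (η : Measure X) [IsProbabilityMeasure η]
    (hmin : Minorizes (evolOp κ) ε η) {f : X → ℝ} (hf : BddMeas f)
    (f0 : ∀ x, 0 ≤ f x) (f1 : ∀ x, f x ≤ 1) (n : ℕ) :
    BddMeas ((evolOp κ)^[n] f) ∧ BddMeas ((evolOp κ)^[n] (fun _ => (1:ℝ))) ∧
    (∃ c : ℝ, 0 < c ∧ ∀ x, c ≤ (evolOp κ)^[n] (fun _ => (1:ℝ)) x) ∧
    ∃ a b : ℝ, b - a = (1 - ε ^ 2) ^ n ∧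
      ∀ x, a * (evolOp κ)^[n] (fun _ => (1:ℝ)) x ≤ (evolOp κ)^[n] f x ∧
        (evolOp κ)^[n] f x ≤ b * (evolOp κ)^[n] (fun _ => (1:ℝ)) x := by
  induction n with
  | zero =>
    refine ⟨hf, ⟨measurable_const, 1, fun x => by simp⟩, ⟨1, one_pos, fun x => le_refl _⟩,
      0, 1, by simp, fun x => ?_⟩
    simpa using ⟨f0 x, f1 x⟩
  | succ n ih =>
    obtain ⟨i1, i2, ⟨c, hc, hch⟩, a, b, hab, hx⟩ := ih
    simp only [Function.iterate_succ_apply']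
    obtain ⟨a', b', hab', hx'⟩ := fk_step κ ε hε η hmin i1 i2 c hc hch a b
      (fun x => (hx x).1) (fun x => (hx x).2)
    refine ⟨i1.evol hmin, i2.evol hmin, ⟨ε * c, mul_pos hε.1 hc, fun x => ?_⟩, a', b', ?_, hx'⟩
    · exact (mul_le_mul_of_nonneg_left (int_pos i2 hch η) hε.1.le).trans
        (hmin _ i2 (fun x => hc.le.trans (hch x)) x).1
    · rw [hab', hab, pow_succ]; ring

/-- Contraction of the discretized Feynman–Kac semigroup in total variation:
for any two initial probability measures μ and ν,
`‖Φ_n(μ) − Φ_n(ν)‖_TV ≤ 2(1−ε²)ⁿ`. -/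
theorem feynman_kac_TV_contraction
    {X : Type*} [MeasurableSpace X] (κ : Kernel X X) [IsFiniteKernel κ]
    (ε : ℝ) (hε : ε ∈ Set.Ioo (0:ℝ) 1) (η : Measure X) [IsProbabilityMeasure η]
    (hmin : Minorizes (evolOp κ) ε η)
    (μ ν : Measure X) [IsProbabilityMeasure μ] [IsProbabilityMeasure ν]
    (n : ℕ) (A : Set X) (hA : MeasurableSet A) :
    |FK κ μ n (A.indicator fun _ => (1:ℝ)) - FK κ ν n (A.indicator fun _ => (1:ℝ))|
      ≤ 2 * (1 - ε ^ 2) ^ n := by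
  have hf : BddMeas (A.indicator fun _ => (1:ℝ)) :=
    ⟨measurable_const.indicator hA, 1, fun x => by
      by_cases h : x ∈ A <;> simp [h]⟩
  obtain ⟨i1, i2, ⟨c, hc, hch⟩, a, b, hab, hx⟩ := fk_iter κ ε hε η hmin hf
    (fun x => by by_cases h : x ∈ A <;> simp [h])
    (fun x => by by_cases h : x ∈ A <;> simp [h]) n
  have key : ∀ (ρ : Measure X) [IsProbabilityMeasure ρ],
      a ≤ FK κ ρ n (A.indicator fun _ => (1:ℝ)) ∧ FK κ ρ n (A.indicator fun _ => (1:ℝ)) ≤ b := by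
    intro ρ _
    have hp := hc.trans_le (int_pos i2 hch ρ)
    unfold FK
    rw [le_div_iff₀ hp, div_le_iff₀ hp, ← integral_const_mul, ← integral_const_mul]
    exact ⟨integral_mono ((i2.integrable' ρ).const_mul a) (i1.integrable' ρ) (fun x => (hx x).1),
      integral_mono (i1.integrable' ρ) ((i2.integrable' ρ).const_mul b) (fun x => (hx x).2)⟩
  obtain ⟨k1, k2⟩ := key μ
  obtain ⟨k3, k4⟩ := key ν
  rw [abs_le]
  constructor <;> linarith
end

section
/- Let d ≥ 1, S the space of smooth ℤ^d-periodic functions ℝ^d → ℝ, b : ℝ^d → ℝ^d a smooth ℤ^d-periodic vector field, σ > 0, and 𝓛 the differential operator 𝓛φ = b·∇φ + (σ²/2)Δφ on S. Let Δt* > 0 and let (Q_Δt)_{Δt ∈ (0,Δt*]} be linear maps S → S admitting the second-order expansion Q_Δt φ = φ + Δt 𝓛φ + (Δt²/2) 𝓛²φ + Δt³ A_3 φ + Δt⁴ R_Δt φ, where A_3 : S → S is linear with ‖A_3 φ‖_{C⁰} ≤ c_3 ‖φ‖_{C^{m_3}} for some c_3, m_3, and where there exist c > 0 and m ∈ ℕ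 with ‖R_Δt φ‖_{C⁰} ≤ c ‖φ‖_{C^m} for all Δt ∈ (0,Δt*] and φ ∈ S. Let W ∈ S and define Q_Δt^W φ := e^{ΔtW/2} · Q_Δt(e^{ΔtW/2} φ). Then Q_Δt^W φ = φ + Δt(𝓛+W)φ + (Δt²/2)(𝓛+W)²φ + Δt³ Ã_3 φ + Δt⁴ R_{W,Δt} φ, where Ã_3 φ = A_3 φ + W³φ/6 + 𝓛(W²φ)/8 + 𝓛²(Wφ)/4 + W 𝓛²φ/4 + W 𝓛(Wφ)/4 + W² 𝓛φ/8, and the remainder R_{W,Δt} (defined by this equality) satisfies a uniform bound: there exist c' > 0 and m' ∈ ℕ with ‖R_{W,Δt} φ‖_{C⁰} ≤ c' ‖φ‖_{C^{m'}} for all Δt ∈ (0,Δt*] and φ ∈ S. -/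
open MeasureTheory Finset

/-- Partial derivative in the i-th coordinate direction. -/
noncomputable def pderiv' {d : ℕ} (i : Fin d) (f : (Fin d → ℝ) → ℝ) (q : Fin d → ℝ) : ℝ :=
  fderiv ℝ f q (Pi.single i 1)

/-- A function on ℝ^d is ℤ^d-periodic if it is invariant under translation by every
vector of ℤ^d. -/
def ZPeriodic {d : ℕ} (f : (Fin d → ℝ) → ℝ) : Prop :=
  ∀ (q : Fin d → ℝ) (m : Fin d → ℤ), f (fun i => q i + (m i : ℝ)) = f q

/-- The space S of smooth ℤ^d-periodic functions. -/
def SmoothPeriodic {d : ℕ} (f : (Fin d → ℝ) → ℝ) : Prop :=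
  ContDiff ℝ (⊤ : ℕ∞) f ∧ ZPeriodic f

/-- Iterated partial derivative `∂^α` along a list of coordinate directions. -/
noncomputable def iterPDeriv {d : ℕ} : List (Fin d) → ((Fin d → ℝ) → ℝ) → (Fin d → ℝ) → ℝ
  | [], f => f
  | i :: l, f => pderiv' i (iterPDeriv l f)

/-- The C^m norm: `‖f‖_{C^m} = sup_{|α| ≤ m} sup_q |∂^α f(q)|`. -/
noncomputable def CmNorm {d : ℕ} (m : ℕ) (f : (Fin d → ℝ) → ℝ) : ℝ :=
  ⨆ p : {l : List (Fin d) // l.length ≤ m} × (Fin d → ℝ), |iterPDeriv p.1.1 f p.2|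

/-- The generator `𝓛φ = b·∇φ + (σ²/2)Δφ`. -/
noncomputable def Lgen {d : ℕ} (b : Fin d → (Fin d → ℝ) → ℝ) (σ : ℝ)
    (f : (Fin d → ℝ) → ℝ) : (Fin d → ℝ) → ℝ :=
  fun q => (∑ i : Fin d, b i q * pderiv' i f q)
    + σ ^ 2 / 2 * ∑ i : Fin d, pderiv' i (pderiv' i f) q

open scoped Nat in
lemma exp_rem (k : ℕ) : ∃ r : ℝ → ℝ, ContDiff ℝ (⊤ : ℕ∞) r ∧
    ∀ s, Real.exp s = (∑ j ∈ Finset.range k, s ^ j / j !) + s ^ k * r s := by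
  set c : ℕ → ℝ := fun n => 1 / ((n + k)! : ℝ) with hc
  have hrad : (FormalMultilinearSeries.ofScalars ℝ c).radius = ⊤ := by
    apply FormalMultilinearSeries.ofScalars_radius_eq_top_of_tendsto
    · refine Filter.Eventually.of_forall fun n => ?_
      simp only [hc]; positivity
    · have h : (fun n : ℕ => ‖c n.succ‖ / ‖c n‖) = fun n : ℕ => 1 / (((n + k : ℕ) : ℝ) + 1) := by
        funext n
        have h1 : (n.succ + k)! = (n + k + 1) * (n + k)! := by
          rw [show n.succ + k = (n + k) + 1 by omega, Nat.factorial_succ]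
        simp only [hc, h1]
        have h2 : ((n + k)! : ℝ) ≠ 0 := by positivity
        have h3 : ((n : ℝ) + k + 1) ≠ 0 := by positivity
        rw [Real.norm_of_nonneg (by positivity), Real.norm_of_nonneg (by positivity)]
        push_cast
        field_simp
      rw [h]
      exact (Filter.tendsto_add_atTop_iff_nat (f := fun n : ℕ => 1 / ((n : ℝ) + 1)) k).2
        tendsto_one_div_add_atTop_nhds_zero_nat
  refine ⟨(FormalMultilinearSeries.ofScalars ℝ c).sum, ?_, fun s => ?_⟩
  · have h := (FormalMultilinearSeries.ofScalars ℝ c).hasFPowerSeriesOnBall (by rw [hrad]; simp)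
    have h2 := h.analyticOnNhd
    rw [hrad, Metric.eball_top] at h2
    exact contDiffOn_univ.1 (h2.contDiffOn (uniqueDiffOn_univ))
  · have h := (FormalMultilinearSeries.ofScalars ℝ c).hasSum (x := s) (by rw [hrad]; simp)
    have h2 : HasSum (fun n : ℕ => s ^ (n + k) / ((n + k)! : ℝ))
        (s ^ k * (FormalMultilinearSeries.ofScalars ℝ c).sum s) := by
      have e : (fun n : ℕ => s ^ (n + k) / ((n + k)! : ℝ)) = fun n : ℕ =>
          s ^ k * (FormalMultilinearSeries.ofScalars ℝ c n) fun _ => s := by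
        funext n
        rw [FormalMultilinearSeries.ofScalars_apply_eq]
        simp only [hc, smul_eq_mul]
        ring
      rw [e]
      exact h.mul_left (s ^ k)
    have h3 := (hasSum_nat_add_iff (f := fun n : ℕ => s ^ n / (n ! : ℝ)) k).1 h2
    have h4 := NormedSpace.expSeries_div_hasSum_exp (𝔸 := ℝ) s
    rw [← Real.exp_eq_exp_ℝ] at h4
    rw [h4.unique h3, add_comm]

/-- jointly smooth family, periodic in space. -/
def JS {d : ℕ} (F : ℝ → (Fin d → ℝ) → ℝ) : Prop :=
  ContDiff ℝ (⊤ : ℕ∞) (fun p : ℝ × (Fin d → ℝ) => F p.1 p.2) ∧ ∀ t, ZPeriodic (F t)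

lemma SmoothPeriodic.js {d : ℕ} {f : (Fin d → ℝ) → ℝ} (h : SmoothPeriodic f) :
    JS (fun _ => f) := ⟨h.1.comp contDiff_snd, fun _ => h.2⟩

lemma JS.sp {d : ℕ} {F : ℝ → (Fin d → ℝ) → ℝ} (h : JS F) (t : ℝ) : SmoothPeriodic (F t) :=
  ⟨ContDiff.comp (g := fun p : ℝ × (Fin d → ℝ) => F p.1 p.2) (f := fun x : Fin d → ℝ => (t, x)) h.1
    (contDiff_const.prodMk contDiff_id), h.2 t⟩

lemma ZPeriodic.pderiv {d : ℕ} {f : (Fin d → ℝ) → ℝ} (h : ZPeriodic f) (i : Fin d) :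
    ZPeriodic (pderiv' i f) := by
  intro q m
  have h1 : (fun x : Fin d → ℝ => f (x + fun i => (m i : ℝ))) = f := by
    funext x; exact h x m
  have h2 := fderiv_comp_add_right (𝕜 := ℝ) (f := f) (x := q) (fun i => (m i : ℝ))
  rw [h1] at h2
  unfold pderiv'
  rw [h2]; rfl

lemma JS.pderiv {d : ℕ} {F : ℝ → (Fin d → ℝ) → ℝ} (h : JS F) (i : Fin d) :
    JS (fun t => pderiv' i (F t)) := by
  refine ⟨?_, fun t => (h.2 t).pderiv i⟩
  have h1 : (fun p : ℝ × (Fin d → ℝ) => pderiv' i (F p.1) p.2) =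
      fun p => fderiv ℝ (fun p : ℝ × (Fin d → ℝ) => F p.1 p.2) p (0, Pi.single i 1) := by
    funext p
    have hd : HasFDerivAt (fun p : ℝ × (Fin d → ℝ) => F p.1 p.2) _ (p.1, p.2) :=
      ((h.1.differentiable (by simp)) (p.1, p.2)).hasFDerivAt
    have h3 : HasFDerivAt (fun x : Fin d → ℝ => (p.1, x)) _ p.2 :=
      (hasFDerivAt_const (𝕜 := ℝ) p.1 p.2).prodMk (hasFDerivAt_id (𝕜 := ℝ) p.2)
    have h2 := (HasFDerivAt.comp p.2 hd h3).fderiv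
    unfold pderiv'
    change fderiv ℝ ((fun p : ℝ × (Fin d → ℝ) => F p.1 p.2) ∘ fun x => (p.1, x)) p.2 _ = _
    rw [h2]
    simp
  rw [h1]
  exact (h.1.fderiv_right (m := (⊤ : ℕ∞)) (by simp)).clm_apply contDiff_const

lemma JS.mul {d : ℕ} {F G : ℝ → (Fin d → ℝ) → ℝ} (hF : JS F) (hG : JS G) :
    JS (fun t x => F t x * G t x) :=
  ⟨hF.1.mul hG.1, fun t q m => by
    change F t _ * G t _ = F t _ * G t _
    rw [hF.2 t q m, hG.2 t q m]⟩

lemma JS.add {d : ℕ} {F G : ℝ → (Fin d → ℝ) → ℝ} (hF : JS F) (hG : JS G) :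
    JS (fun t x => F t x + G t x) :=
  ⟨hF.1.add hG.1, fun t q m => by
    change F t _ + G t _ = F t _ + G t _
    rw [hF.2 t q m, hG.2 t q m]⟩

lemma JS.const {d : ℕ} (c : ℝ) : JS (d := d) (fun _ _ => c) :=
  ⟨contDiff_const, fun _ _ _ => rfl⟩

lemma JS.iter {d : ℕ} {F : ℝ → (Fin d → ℝ) → ℝ} (h : JS F) (l : List (Fin d)) :
    JS (fun t => iterPDeriv l (F t)) := by
  induction l with
  | nil => exact h
  | cons i l ih => exact ih.pderiv i

lemma JS.bdd {d : ℕ} {F : ℝ → (Fin d → ℝ) → ℝ} (h : JS F) (T : ℝ) :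
    ∃ C : ℝ, 0 ≤ C ∧ ∀ t ∈ Set.Ioc (0:ℝ) T, ∀ q, |F t q| ≤ C := by
  have hK : IsCompact (Set.Icc (0:ℝ) T ×ˢ Set.Icc (0 : Fin d → ℝ) 1) :=
    isCompact_Icc.prod isCompact_Icc
  obtain ⟨C, hC⟩ := hK.exists_bound_of_continuousOn h.1.continuous.continuousOn
  refine ⟨max C 0, le_max_right _ _, fun t ht q => ?_⟩
  have h1 : F t q = F t (fun i => Int.fract (q i)) := by
    rw [← h.2 t (fun i => Int.fract (q i)) (fun i => ⌊q i⌋)]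
    congr 1; funext i; exact (Int.fract_add_floor (q i)).symm
  rw [h1]
  refine le_trans (hC (t, fun i => Int.fract (q i)) ⟨⟨ht.1.le, ht.2⟩, ?_⟩) (le_max_left _ _)
  exact ⟨fun i => Int.fract_nonneg _, fun i => (Int.fract_lt_one _).le⟩

lemma SmoothPeriodic.pderiv {d : ℕ} {f : (Fin d → ℝ) → ℝ} (h : SmoothPeriodic f) (i : Fin d) :
    SmoothPeriodic (pderiv' i f) := (h.js.pderiv i).sp 0

lemma SmoothPeriodic.iter {d : ℕ} {f : (Fin d → ℝ) → ℝ} (h : SmoothPeriodic f)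
    (l : List (Fin d)) : SmoothPeriodic (iterPDeriv l f) := (h.js.iter l).sp 0

lemma SmoothPeriodic.add {d : ℕ} {f g : (Fin d → ℝ) → ℝ} (h : SmoothPeriodic f)
    (hg : SmoothPeriodic g) : SmoothPeriodic (f + g) := (h.js.add hg.js).sp 0

lemma SmoothPeriodic.mul {d : ℕ} {f g : (Fin d → ℝ) → ℝ} (h : SmoothPeriodic f)
    (hg : SmoothPeriodic g) : SmoothPeriodic (fun x => f x * g x) := (h.js.mul hg.js).sp 0

lemma SmoothPeriodic.smul {d : ℕ} {f : (Fin d → ℝ) → ℝ} (h : SmoothPeriodic f)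
    (c : ℝ) : SmoothPeriodic (c • f) := ((JS.const c).mul h.js).sp 0

lemma SmoothPeriodic.diff {d : ℕ} {f : (Fin d → ℝ) → ℝ} (h : SmoothPeriodic f) (q) :
    DifferentiableAt ℝ f q := h.1.differentiable (by simp) q

lemma CmNorm_bdd {d : ℕ} {f : (Fin d → ℝ) → ℝ} (h : SmoothPeriodic f) (m : ℕ) :
    BddAbove (Set.range fun p : {l : List (Fin d) // l.length ≤ m} × (Fin d → ℝ) =>
      |iterPDeriv p.1.1 f p.2|) := by
  have hfin : {l : List (Fin d) | l.length ≤ m}.Finite := List.finite_length_le _ _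
  choose C hC0 hC using fun l => (h.js.iter l).bdd 1
  refine ⟨∑ l ∈ hfin.toFinset, C l, ?_⟩
  rintro _ ⟨⟨⟨l, hl⟩, q⟩, rfl⟩
  refine le_trans (hC l 1 (by simp) q) ?_
  exact Finset.single_le_sum (f := C) (fun i _ => hC0 i) (by simpa using hl)

lemma CmNorm_nonneg {d : ℕ} (m : ℕ) (f : (Fin d → ℝ) → ℝ) : 0 ≤ CmNorm m f :=
  Real.iSup_nonneg fun _ => abs_nonneg _

lemma le_CmNorm {d : ℕ} {f : (Fin d → ℝ) → ℝ} (h : SmoothPeriodic f) {m : ℕ}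
    (l : List (Fin d)) (hl : l.length ≤ m) (q) : |iterPDeriv l f q| ≤ CmNorm m f :=
  le_ciSup (CmNorm_bdd h m) (⟨⟨l, hl⟩, q⟩ : {l : List (Fin d) // l.length ≤ m} × (Fin d → ℝ))

lemma CmNorm_le {d : ℕ} {f : (Fin d → ℝ) → ℝ} {m : ℕ} {C : ℝ}
    (h : ∀ l : List (Fin d), l.length ≤ m → ∀ q, |iterPDeriv l f q| ≤ C) : CmNorm m f ≤ C := by
  have : Nonempty ({l : List (Fin d) // l.length ≤ m} × (Fin d → ℝ)) := ⟨⟨⟨[], by simp⟩, 0⟩⟩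
  exact ciSup_le fun p => h p.1.1 p.1.2 p.2

lemma CmNorm_mono {d : ℕ} {f : (Fin d → ℝ) → ℝ} (h : SmoothPeriodic f) {m n : ℕ}
    (hmn : m ≤ n) : CmNorm m f ≤ CmNorm n f :=
  CmNorm_le fun l hl q => le_CmNorm h l (hl.trans hmn) q

lemma iter_append {d : ℕ} (l : List (Fin d)) (i : Fin d) (f : (Fin d → ℝ) → ℝ) :
    iterPDeriv (l ++ [i]) f = iterPDeriv l (pderiv' i f) := by
  induction l with
  | nil => rfl
  | cons j l ih => change pderiv' j (iterPDeriv (l ++ [i]) f) = pderiv' j _; rw [ih]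

lemma pderiv_add {d : ℕ} {f g : (Fin d → ℝ) → ℝ} (hf : SmoothPeriodic f)
    (hg : SmoothPeriodic g) (i : Fin d) : pderiv' i (f + g) = pderiv' i f + pderiv' i g := by
  funext q
  simp [pderiv', fderiv_add (hf.diff q) (hg.diff q)]

lemma pderiv_smul {d : ℕ} {f : (Fin d → ℝ) → ℝ} (hf : SmoothPeriodic f)
    (c : ℝ) (i : Fin d) : pderiv' i (c • f) = c • pderiv' i f := by
  funext q
  simp [pderiv', fderiv_const_smul (hf.diff q)]

lemma pderiv_mul {d : ℕ} {f g : (Fin d → ℝ) → ℝ} (hf : SmoothPeriodic f)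
    (hg : SmoothPeriodic g) (i : Fin d) : pderiv' i (fun x => f x * g x) =
      (fun x => pderiv' i f x * g x) + (fun x => f x * pderiv' i g x) := by
  funext q
  simp [pderiv', fderiv_fun_mul (hf.diff q) (hg.diff q)]
  ring

lemma iter_add {d : ℕ} {f g : (Fin d → ℝ) → ℝ} (hf : SmoothPeriodic f)
    (hg : SmoothPeriodic g) (l : List (Fin d)) :
    iterPDeriv l (f + g) = iterPDeriv l f + iterPDeriv l g := by
  induction l with
  | nil => rfl
  | cons i l ih =>
    change pderiv' i _ = pderiv' i _ + pderiv' i _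
    rw [ih, pderiv_add (hf.iter l) (hg.iter l)]

/-- bounded operator families -/
def BF {d : ℕ} (T : ℝ) (F : ℝ → ((Fin d → ℝ) → ℝ) → ((Fin d → ℝ) → ℝ)) : Prop :=
  (∀ t ∈ Set.Ioc (0:ℝ) T, ∀ f, SmoothPeriodic f → SmoothPeriodic (F t f)) ∧
  ∀ l : List (Fin d), ∃ C : ℝ, 0 ≤ C ∧ ∃ m : ℕ, ∀ t ∈ Set.Ioc (0:ℝ) T,
    ∀ f, SmoothPeriodic f → ∀ q, |iterPDeriv l (F t f) q| ≤ C * CmNorm m f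

lemma BF.id {d : ℕ} {T : ℝ} : BF (d := d) T (fun _ f => f) :=
  ⟨fun _ _ _ h => h, fun l => ⟨1, zero_le_one, l.length, fun t _ f hf q => by
    rw [one_mul]; exact le_CmNorm hf l le_rfl q⟩⟩

lemma BF.norm {d : ℕ} {T : ℝ} {F : ℝ → ((Fin d → ℝ) → ℝ) → ((Fin d → ℝ) → ℝ)} (h : BF T F)
    (n : ℕ) : ∃ C : ℝ, 0 ≤ C ∧ ∃ m : ℕ, ∀ t ∈ Set.Ioc (0:ℝ) T,
    ∀ f, SmoothPeriodic f → CmNorm n (F t f) ≤ C * CmNorm m f := by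
  have hfin : {l : List (Fin d) | l.length ≤ n}.Finite := List.finite_length_le _ _
  choose C hC0 m hC using h.2
  refine ⟨∑ l ∈ hfin.toFinset, C l, Finset.sum_nonneg fun i _ => hC0 i,
    hfin.toFinset.sup m, fun t ht f hf => CmNorm_le fun l hl q => ?_⟩
  have hl' : l ∈ hfin.toFinset := by simpa using hl
  refine le_trans (hC l t ht f hf q) ?_
  exact mul_le_mul (Finset.single_le_sum (f := C) (fun i _ => hC0 i) hl')
    (CmNorm_mono hf (Finset.le_sup hl')) (CmNorm_nonneg _ _)
    (Finset.sum_nonneg fun i _ => hC0 i)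

lemma BF.comp {d : ℕ} {T : ℝ} {F G : ℝ → ((Fin d → ℝ) → ℝ) → ((Fin d → ℝ) → ℝ)}
    (hF : BF T F) (hG : BF T G) : BF T (fun t f => F t (G t f)) := by
  refine ⟨fun t ht f hf => hF.1 t ht _ (hG.1 t ht f hf), fun l => ?_⟩
  obtain ⟨C, hC, m, h⟩ := hF.2 l
  obtain ⟨C', hC', m', h'⟩ := hG.norm m
  refine ⟨C * C', mul_nonneg hC hC', m', fun t ht f hf q => ?_⟩
  refine (h t ht _ (hG.1 t ht f hf) q).trans ?_
  rw [mul_assoc]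
  exact mul_le_mul_of_nonneg_left (h' t ht f hf) hC

lemma BF.add {d : ℕ} {T : ℝ} {F G : ℝ → ((Fin d → ℝ) → ℝ) → ((Fin d → ℝ) → ℝ)}
    (hF : BF T F) (hG : BF T G) : BF T (fun t f => F t f + G t f) := by
  refine ⟨fun t ht f hf => (hF.1 t ht _ hf).add (hG.1 t ht f hf), fun l => ?_⟩
  obtain ⟨C, hC, m, h⟩ := hF.2 l
  obtain ⟨C', hC', m', h'⟩ := hG.2 l
  refine ⟨C + C', add_nonneg hC hC', max m m', fun t ht f hf q => ?_⟩
  rw [iter_add (hF.1 t ht _ hf) (hG.1 t ht f hf), add_mul]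
  refine (abs_add_le _ _).trans (add_le_add ?_ ?_)
  · exact (h t ht f hf q).trans
      (mul_le_mul_of_nonneg_left (CmNorm_mono hf (le_max_left _ _)) hC)
  · exact (h' t ht f hf q).trans
      (mul_le_mul_of_nonneg_left (CmNorm_mono hf (le_max_right _ _)) hC')

lemma BF.pderiv {d : ℕ} {T : ℝ} (i : Fin d) : BF T (fun _ f => pderiv' i f) := by
  refine ⟨fun t ht f hf => hf.pderiv i, fun l => ⟨1, zero_le_one, l.length + 1, ?_⟩⟩
  intro t _ f hf q
  rw [one_mul, ← iter_append]
  exact le_CmNorm hf _ (by simp) q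

lemma BF.js {d : ℕ} {T : ℝ} {H : ℝ → (Fin d → ℝ) → ℝ} (hH : JS H) :
    BF T (fun t f => fun x => H t x * f x) := by
  refine ⟨fun t _ f hf => (hH.sp t).mul hf, fun l => ?_⟩
  induction l using List.reverseRecOn generalizing H with
  | nil =>
    obtain ⟨C, hC, h⟩ := hH.bdd T
    refine ⟨C, hC, 0, fun t ht f hf q => ?_⟩
    change |H t q * f q| ≤ _
    rw [abs_mul]
    exact mul_le_mul (h t ht q) (le_CmNorm hf [] (by simp) q) (abs_nonneg _) hC
  | append_singleton l i ih =>
    obtain ⟨C, hC, m, h⟩ := ih (hH.pderiv i)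
    obtain ⟨C', hC', m', h'⟩ := ih hH
    obtain ⟨C'', hC'', m'', h''⟩ := (BF.pderiv (T := T) i).norm m'
    refine ⟨C + C' * C'', by positivity, max m m'', fun t ht f hf q => ?_⟩
    rw [iter_append, pderiv_mul (hH.sp t) hf, iter_add (((hH.pderiv i).sp t).mul hf)
      ((hH.sp t).mul (hf.pderiv i)), add_mul]
    refine (abs_add_le _ _).trans (add_le_add ?_ ?_)
    · exact (h t ht f hf q).trans
        (mul_le_mul_of_nonneg_left (CmNorm_mono hf (le_max_left _ _)) hC)
    · refine (h' t ht _ (hf.pderiv i) q).trans ?_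
      rw [mul_assoc]
      exact mul_le_mul_of_nonneg_left ((h'' t ht f hf).trans
        (mul_le_mul_of_nonneg_left (CmNorm_mono hf (le_max_right _ _)) hC'')) hC'

lemma BF.mul {d : ℕ} {T : ℝ} {H : ℝ → (Fin d → ℝ) → ℝ} (hH : JS H)
    {F : ℝ → ((Fin d → ℝ) → ℝ) → ((Fin d → ℝ) → ℝ)} (hF : BF T F) :
    BF T (fun t f => fun x => H t x * F t f x) := (BF.js hH).comp hF

lemma BF.sum {d : ℕ} {T : ℝ} {ι : Type} (s : Finset ι)
    {F : ι → ℝ → ((Fin d → ℝ) → ℝ) → ((Fin d → ℝ) → ℝ)} (hF : ∀ i, BF T (F i)) :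
    BF T (fun t f => fun x => ∑ i ∈ s, F i t f x) := by
  classical
  induction s using Finset.induction_on with
  | empty =>
    have := (JS.const (d := d) 0)
    convert BF.js (T := T) this using 3
    simp
  | insert a s ha ih =>
    convert (hF a).add ih using 3
    funext x
    simp [Finset.sum_insert ha]

lemma BF.Lgen {d : ℕ} {T : ℝ} {b : Fin d → (Fin d → ℝ) → ℝ} (σ : ℝ)
    (hb : ∀ i, SmoothPeriodic (b i)) : BF T (fun _ f => Lgen b σ f) :=
  (BF.sum Finset.univ fun i => BF.mul (hb i).js (BF.pderiv i)).add
    (BF.mul (JS.const (σ ^ 2 / 2)) (BF.sum Finset.univ fun i => (BF.pderiv i).comp (BF.pderiv i)))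

lemma Lgen_add {d : ℕ} (b : Fin d → (Fin d → ℝ) → ℝ) (σ : ℝ) {f g : (Fin d → ℝ) → ℝ}
    (hf : SmoothPeriodic f) (hg : SmoothPeriodic g) :
    Lgen b σ (f + g) = Lgen b σ f + Lgen b σ g := by
  funext q
  simp only [Lgen, Pi.add_apply, pderiv_add hf hg, pderiv_add (hf.pderiv _) (hg.pderiv _),
    mul_add, Finset.sum_add_distrib]
  ring

lemma Lgen_smul {d : ℕ} (b : Fin d → (Fin d → ℝ) → ℝ) (σ : ℝ) {f : (Fin d → ℝ) → ℝ}
    (hf : SmoothPeriodic f) (c : ℝ) :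
    Lgen b σ (c • f) = c • Lgen b σ f := by
  funext q
  simp only [Lgen, Pi.smul_apply, smul_eq_mul, pderiv_smul hf, pderiv_smul (hf.pderiv _),
    mul_add, Finset.mul_sum]
  congr 1 <;> refine Finset.sum_congr rfl fun i _ => ?_ <;> ring

lemma js_aux {d : ℕ} {W : (Fin d → ℝ) → ℝ} (hW : SmoothPeriodic W) {r : ℝ → ℝ}
    (hr : ContDiff ℝ (⊤ : ℕ∞) r) (k : ℕ) (a : ℝ) :
    JS (fun t x => (a * W x) ^ k * r (t * (a * W x))) := by
  have hw : ContDiff ℝ (⊤ : ℕ∞) (fun p : ℝ × (Fin d → ℝ) => a * W p.2) :=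
    contDiff_const.mul (hW.1.comp contDiff_snd)
  refine ⟨(hw.pow k).mul (hr.comp (contDiff_fst.mul hw)), fun t q m => ?_⟩
  simp only [hW.2 q m]

/-- pointwise bounded operator families -/
def PB {d : ℕ} (T : ℝ) (F : ℝ → ((Fin d → ℝ) → ℝ) → ((Fin d → ℝ) → ℝ)) : Prop :=
  ∃ C : ℝ, 0 ≤ C ∧ ∃ m : ℕ, ∀ t ∈ Set.Ioc (0:ℝ) T,
    ∀ f, SmoothPeriodic f → ∀ q, |F t f q| ≤ C * CmNorm m f

lemma BF.pb {d : ℕ} {T : ℝ} {F : ℝ → ((Fin d → ℝ) → ℝ) → ((Fin d → ℝ) → ℝ)}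
    (h : BF T F) : PB T F := h.2 []

lemma PB.comp {d : ℕ} {T : ℝ} {F G : ℝ → ((Fin d → ℝ) → ℝ) → ((Fin d → ℝ) → ℝ)}
    (hF : PB T F) (hG : BF T G) : PB T (fun t f => F t (G t f)) := by
  obtain ⟨C, hC, m, h⟩ := hF
  obtain ⟨C', hC', m', h'⟩ := hG.norm m
  refine ⟨C * C', mul_nonneg hC hC', m', fun t ht f hf q => ?_⟩
  refine (h t ht _ (hG.1 t ht f hf) q).trans ?_
  rw [mul_assoc]
  exact mul_le_mul_of_nonneg_left (h' t ht f hf) hC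

lemma PB.add {d : ℕ} {T : ℝ} {F G : ℝ → ((Fin d → ℝ) → ℝ) → ((Fin d → ℝ) → ℝ)}
    (hF : PB T F) (hG : PB T G) : PB T (fun t f q => F t f q + G t f q) := by
  obtain ⟨C, hC, m, h⟩ := hF
  obtain ⟨C', hC', m', h'⟩ := hG
  refine ⟨C + C', add_nonneg hC hC', max m m', fun t ht f hf q => ?_⟩
  rw [add_mul]
  refine (abs_add_le _ _).trans (add_le_add ?_ ?_)
  · exact (h t ht f hf q).trans
      (mul_le_mul_of_nonneg_left (CmNorm_mono hf (le_max_left _ _)) hC)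
  · exact (h' t ht f hf q).trans
      (mul_le_mul_of_nonneg_left (CmNorm_mono hf (le_max_right _ _)) hC')

lemma PB.mul {d : ℕ} {T : ℝ} {F : ℝ → ((Fin d → ℝ) → ℝ) → ((Fin d → ℝ) → ℝ)}
    (hF : PB T F) {H : ℝ → (Fin d → ℝ) → ℝ} (hH : JS H) :
    PB T (fun t f q => H t q * F t f q) := by
  obtain ⟨C, hC, m, h⟩ := hF
  obtain ⟨C', hC', h'⟩ := hH.bdd T
  refine ⟨C' * C, mul_nonneg hC' hC, m, fun t ht f hf q => ?_⟩
  rw [abs_mul, mul_assoc]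
  exact mul_le_mul (h' t ht q) (h t ht f hf q) (abs_nonneg _) hC'

/-- Second order schemes for Feynman–Kac dynamics: if Q_Δt is a second-order discretization
of the dynamics with generator 𝓛, then `Q_Δt^W φ = e^{ΔtW/2} Q_Δt (e^{ΔtW/2} φ)` is a
second-order discretization of the Feynman–Kac dynamics with generator 𝓛 + W, with
explicit third-order operator Ã_3. -/
theorem second_order_weighted_scheme
    (d : ℕ) (hd : 1 ≤ d) (Δts : ℝ) (hΔts : 0 < Δts)
    (b : Fin d → (Fin d → ℝ) → ℝ) (σ : ℝ) (hσ : 0 < σ)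
    (hb : ∀ i, ContDiff ℝ (⊤ : ℕ∞) (b i)) (hbper : ∀ i, ZPeriodic (b i))
    (A3 : ((Fin d → ℝ) → ℝ) → ((Fin d → ℝ) → ℝ))
    (hA3map : ∀ f, SmoothPeriodic f → SmoothPeriodic (A3 f))
    (hA3add : ∀ f g, SmoothPeriodic f → SmoothPeriodic g → A3 (f + g) = A3 f + A3 g)
    (hA3smul : ∀ (c : ℝ) (f), SmoothPeriodic f → A3 (c • f) = c • A3 f)
    (hA3bdd : ∃ c3 : ℝ, 0 ≤ c3 ∧ ∃ m3 : ℕ, ∀ f, SmoothPeriodic f → ∀ q,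
      |A3 f q| ≤ c3 * CmNorm m3 f)
    (Q : ℝ → ((Fin d → ℝ) → ℝ) → ((Fin d → ℝ) → ℝ))
    (hQmap : ∀ Δt ∈ Set.Ioc (0:ℝ) Δts, ∀ f, SmoothPeriodic f → SmoothPeriodic (Q Δt f))
    (hQadd : ∀ Δt ∈ Set.Ioc (0:ℝ) Δts, ∀ f g, SmoothPeriodic f → SmoothPeriodic g →
      Q Δt (f + g) = Q Δt f + Q Δt g)
    (hQsmul : ∀ Δt ∈ Set.Ioc (0:ℝ) Δts, ∀ (c : ℝ) (f), SmoothPeriodic f →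
      Q Δt (c • f) = c • Q Δt f)
    (hR : ∃ c : ℝ, 0 < c ∧ ∃ m : ℕ, ∀ Δt ∈ Set.Ioc (0:ℝ) Δts, ∀ f, SmoothPeriodic f → ∀ q,
      |Q Δt f q - f q - Δt * Lgen b σ f q - Δt ^ 2 / 2 * Lgen b σ (Lgen b σ f) q
          - Δt ^ 3 * A3 f q|
        ≤ c * Δt ^ 4 * CmNorm m f)
    (W : (Fin d → ℝ) → ℝ) (hW : SmoothPeriodic W) :
    ∃ c' : ℝ, 0 < c' ∧ ∃ m' : ℕ, ∀ Δt ∈ Set.Ioc (0:ℝ) Δts, ∀ f, SmoothPeriodic f → ∀ q,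
      |Real.exp (Δt * W q / 2) * Q Δt (fun x => Real.exp (Δt * W x / 2) * f x) q - f q
          - Δt * (Lgen b σ f q + W q * f q)
          - Δt ^ 2 / 2 * (Lgen b σ (fun x => Lgen b σ f x + W x * f x) q
              + W q * (Lgen b σ f q + W q * f q))
          - Δt ^ 3 * (A3 f q + W q ^ 3 * f q / 6
              + Lgen b σ (fun x => W x ^ 2 * f x) q / 8
              + Lgen b σ (Lgen b σ (fun x => W x * f x)) q / 4
              + W q * Lgen b σ (Lgen b σ f) q / 4
              + W q * Lgen b σ (fun x => W x * f x) q / 4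
              + W q ^ 2 * Lgen b σ f q / 8)|
        ≤ c' * Δt ^ 4 * CmNorm m' f := by
  obtain ⟨r1, hr1, hr1'⟩ := exp_rem 1
  obtain ⟨r2, hr2, hr2'⟩ := exp_rem 2
  obtain ⟨r3, hr3, hr3'⟩ := exp_rem 3
  obtain ⟨r4, hr4, hr4'⟩ := exp_rem 4
  have hbS : ∀ i, SmoothPeriodic (b i) := fun i => ⟨hb i, hbper i⟩
  have hH1 := js_aux hW hr1 1 (1 / 2)
  have hH2 := js_aux hW hr2 2 (1 / 2)
  have hH3 := js_aux hW hr3 3 (1 / 2)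
  have hH4 := js_aux hW hr4 4 1
  have hE := js_aux hW Real.contDiff_exp 0 (1 / 2)
  have hL : BF Δts (fun _ f => Lgen b σ f) := BF.Lgen σ hbS
  have hLL := hL.comp hL
  have hA : PB Δts (fun _ f => A3 f) := by
    obtain ⟨c3, h0, m3, h⟩ := hA3bdd
    exact ⟨c3, h0, m3, fun t _ f hf q => h f hf q⟩
  have hRq : PB Δts (fun t f q => (Q t f q - f q - t * Lgen b σ f q
      - t ^ 2 / 2 * Lgen b σ (Lgen b σ f) q - t ^ 3 * A3 f q) / t ^ 4) := by
    obtain ⟨c, h0, m, h⟩ := hR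
    refine ⟨c, h0.le, m, fun t ht f hf q => ?_⟩
    have ht4 : 0 < t ^ 4 := pow_pos ht.1 4
    rw [abs_div, abs_of_pos ht4, div_le_iff₀ ht4]
    refine (h t ht f hf q).trans (le_of_eq (by ring))
  have hW1 : JS (fun _ : ℝ => W) := hW.js
  have hW2 := hW1.mul hW1
  have total := ((((((((((BF.js (T := Δts) hH4).pb.add
    (hL.comp (BF.js hH3)).pb).add
    (((hL.comp (BF.js hH2)).pb.mul hW1).mul (JS.const (1 / 2)))).add
    (((hL.comp (BF.js hH1)).pb.mul hW2).mul (JS.const (1 / 8)))).add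
    ((hL.comp (BF.js hE)).pb.mul hH3)).add
    ((hLL.comp (BF.js hH2)).pb.mul (JS.const (1 / 2)))).add
    (((hLL.comp (BF.js hH1)).pb.mul hW1).mul (JS.const (1 / 4)))).add
    (((hLL.comp (BF.js hE)).pb.mul hH2).mul (JS.const (1 / 2)))).add
    (hA.comp (BF.js hH1))).add
    ((hA.comp (BF.js hE)).mul hH1)).add
    ((hRq.comp (BF.js hE)).mul hE)
  obtain ⟨C, hC, m', hT⟩ := total
  refine ⟨C + 1, by positivity, m', fun t ht f hf q => ?_⟩
  have hTq := hT t ht f hf q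
  clear hT hRq hA hR hA3bdd
  have ht4 : 0 < t ^ 4 := pow_pos ht.1 4
  have hN := CmNorm_nonneg m' f
  set H1 : (Fin d → ℝ) → ℝ := fun x => (1 / 2 * W x) ^ 1 * r1 (t * (1 / 2 * W x)) with hH1d
  set H2 : (Fin d → ℝ) → ℝ := fun x => (1 / 2 * W x) ^ 2 * r2 (t * (1 / 2 * W x)) with hH2d
  set H3 : (Fin d → ℝ) → ℝ := fun x => (1 / 2 * W x) ^ 3 * r3 (t * (1 / 2 * W x)) with hH3d
  have s1 : SmoothPeriodic (fun x => H1 x * f x) := (hH1.sp t).mul hf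
  have s2 : SmoothPeriodic (fun x => H2 x * f x) := (hH2.sp t).mul hf
  have s3 : SmoothPeriodic (fun x => H3 x * f x) := (hH3.sp t).mul hf
  have sW : SmoothPeriodic (fun x => W x * f x) := hW.mul hf
  have sWW : SmoothPeriodic (fun x => W x ^ 2 * f x) := by
    have := hW.mul sW
    convert this using 2
    ring
  have hEeq : (fun x => (1 / 2 * W x) ^ 0 * Real.exp (t * (1 / 2 * W x)) * f x)
      = fun x => Real.exp (t * W x / 2) * f x := by
    funext x
    rw [pow_zero, one_mul, show t * (1 / 2 * W x) = t * W x / 2 by ring]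
  have e1 : ∀ x, Real.exp (t * W x / 2) = 1 + t * H1 x := by
    intro x
    rw [show t * W x / 2 = t * (1 / 2 * W x) by ring, hr1']
    simp only [hH1d, Finset.sum_range_succ, Finset.sum_range_zero, Nat.factorial]
    push_cast
    ring
  have e2 : ∀ x, Real.exp (t * W x / 2) = 1 + t / 2 * W x + t ^ 2 * H2 x := by
    intro x
    rw [show t * W x / 2 = t * (1 / 2 * W x) by ring, hr2']
    simp only [hH2d, Finset.sum_range_succ, Finset.sum_range_zero, Nat.factorial]
    push_cast
    ring
  have e3 : ∀ x, Real.exp (t * W x / 2)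
      = 1 + t / 2 * W x + t ^ 2 / 8 * W x ^ 2 + t ^ 3 * H3 x := by
    intro x
    rw [show t * W x / 2 = t * (1 / 2 * W x) by ring, hr3']
    simp only [hH3d, Finset.sum_range_succ, Finset.sum_range_zero, Nat.factorial]
    push_cast
    ring
  have e4 : Real.exp (t * W q / 2) * Real.exp (t * W q / 2)
      = 1 + t * W q + t ^ 2 / 2 * W q ^ 2 + t ^ 3 / 6 * W q ^ 3
        + t ^ 4 * ((1 * W q) ^ 4 * r4 (t * (1 * W q))) := by
    rw [← Real.exp_add, show t * W q / 2 + t * W q / 2 = t * (1 * W q) by ring, hr4']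
    simp only [Finset.sum_range_succ, Finset.sum_range_zero, Nat.factorial]
    push_cast
    ring
  set g : (Fin d → ℝ) → ℝ := fun x => Real.exp (t * W x / 2) * f x with hg
  have g1 : g = f + t • (fun x => H1 x * f x) := by
    funext x; simp only [hg, Pi.add_apply, Pi.smul_apply, smul_eq_mul, e1 x]; ring
  have g2 : g = f + (t / 2) • (fun x => W x * f x) + (t ^ 2) • (fun x => H2 x * f x) := by
    funext x; simp only [hg, Pi.add_apply, Pi.smul_apply, smul_eq_mul, e2 x]; ring
  have g3 : g = f + (t / 2) • (fun x => W x * f x) + (t ^ 2 / 8) • (fun x => W x ^ 2 * f x)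
      + (t ^ 3) • (fun x => H3 x * f x) := by
    funext x; simp only [hg, Pi.add_apply, Pi.smul_apply, smul_eq_mul, e3 x]; ring
  have Lsp : ∀ {h}, SmoothPeriodic h → SmoothPeriodic (Lgen b σ h) := fun {h} hh => hL.1 t ht h hh
  have l1 : Lgen b σ g = Lgen b σ f + t • Lgen b σ (fun x => H1 x * f x) := by
    rw [g1, Lgen_add b σ hf (s1.smul t), Lgen_smul b σ s1]
  have l2 : Lgen b σ g = Lgen b σ f + (t / 2) • Lgen b σ (fun x => W x * f x)
      + (t ^ 2) • Lgen b σ (fun x => H2 x * f x) := by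
    rw [g2, Lgen_add b σ (hf.add (sW.smul _)) (s2.smul _), Lgen_add b σ hf (sW.smul _),
      Lgen_smul b σ s2, Lgen_smul b σ sW]
  have l3 : Lgen b σ g = Lgen b σ f + (t / 2) • Lgen b σ (fun x => W x * f x)
      + (t ^ 2 / 8) • Lgen b σ (fun x => W x ^ 2 * f x)
      + (t ^ 3) • Lgen b σ (fun x => H3 x * f x) := by
    rw [g3, Lgen_add b σ ((hf.add (sW.smul _)).add (sWW.smul _)) (s3.smul _),
      Lgen_add b σ (hf.add (sW.smul _)) (sWW.smul _), Lgen_add b σ hf (sW.smul _),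
      Lgen_smul b σ s3, Lgen_smul b σ sW, Lgen_smul b σ sWW]
  have ll1 : Lgen b σ (Lgen b σ g) = Lgen b σ (Lgen b σ f)
      + t • Lgen b σ (Lgen b σ (fun x => H1 x * f x)) := by
    rw [l1, Lgen_add b σ (Lsp hf) ((Lsp s1).smul t), Lgen_smul b σ (Lsp s1)]
  have ll2 : Lgen b σ (Lgen b σ g) = Lgen b σ (Lgen b σ f)
      + (t / 2) • Lgen b σ (Lgen b σ (fun x => W x * f x))
      + (t ^ 2) • Lgen b σ (Lgen b σ (fun x => H2 x * f x)) := by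
    rw [l2, Lgen_add b σ ((Lsp hf).add ((Lsp sW).smul _)) ((Lsp s2).smul _),
      Lgen_add b σ (Lsp hf) ((Lsp sW).smul _),
      Lgen_smul b σ (Lsp s2), Lgen_smul b σ (Lsp sW)]
  have a1 : A3 g = A3 f + t • A3 (fun x => H1 x * f x) := by
    rw [g1, hA3add _ _ hf (s1.smul t), hA3smul _ _ s1]
  have lw : Lgen b σ (fun x => Lgen b σ f x + W x * f x) = Lgen b σ (Lgen b σ f)
      + Lgen b σ (fun x => W x * f x) := Lgen_add b σ (Lsp hf) sW
  replace l1 := congrFun l1 q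
  replace l2 := congrFun l2 q
  replace l3 := congrFun l3 q
  replace ll1 := congrFun ll1 q
  replace ll2 := congrFun ll2 q
  replace a1 := congrFun a1 q
  replace lw := congrFun lw q
  simp only [Pi.add_apply, Pi.smul_apply, smul_eq_mul] at l1 l2 l3 ll1 ll2 a1 lw hTq
  simp only [hEeq] at hTq
  have hEq : (1 / 2 * W q) ^ 0 * Real.exp (t * (1 / 2 * W q)) = Real.exp (t * W q / 2) := by
    rw [pow_zero, one_mul, show t * (1 / 2 * W q) = t * W q / 2 by ring]
  rw [hEq] at hTq
  have f1 : (fun x => (1 / 2 * W x) ^ 1 * r1 (t * (1 / 2 * W x)) * f x) = fun x => H1 x * f x := rfl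
  have k1 : (1 / 2 * W q) ^ 1 * r1 (t * (1 / 2 * W q)) = H1 q := rfl
  have f2 : (fun x => (1 / 2 * W x) ^ 2 * r2 (t * (1 / 2 * W x)) * f x) = fun x => H2 x * f x := rfl
  have k2 : (1 / 2 * W q) ^ 2 * r2 (t * (1 / 2 * W q)) = H2 q := rfl
  have f3 : (fun x => (1 / 2 * W x) ^ 3 * r3 (t * (1 / 2 * W x)) * f x) = fun x => H3 x * f x := rfl
  have k3 : (1 / 2 * W q) ^ 3 * r3 (t * (1 / 2 * W q)) = H3 q := rfl
  rw [f1, f2, f3, k1, k2, k3] at hTq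
  have hgq : g q = Real.exp (t * W q / 2) * f q := rfl
  set Rq : ℝ := (Q t g q - g q - t * Lgen b σ g q
      - t ^ 2 / 2 * Lgen b σ (Lgen b σ g) q - t ^ 3 * A3 g q) / t ^ 4 with hRqd
  have hQ : Q t g q = g q + t * Lgen b σ g q + t ^ 2 / 2 * Lgen b σ (Lgen b σ g) q
      + t ^ 3 * A3 g q + t ^ 4 * Rq := by
    rw [hRqd, mul_div_cancel₀ _ ht4.ne']; ring
  have key := mul_le_mul_of_nonneg_left hTq ht4.le
  rw [← abs_of_pos ht4, ← abs_mul, abs_of_pos ht4] at key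
  have fin : t ^ 4 * (C * CmNorm m' f) ≤ (C + 1) * t ^ 4 * CmNorm m' f := by
    nlinarith [mul_nonneg ht4.le hN]
  refine le_trans (le_of_eq ?_) (key.trans fin)
  congr 1
  rw [lw]
  have h1 := e1 q
  have h2 := e2 q
  have h3 := e3 q
  set E := Real.exp (t * W q / 2) with hEd
  clear_value Rq E H1 H2 H3
  linear_combination E * hQ + E * hgq + f q * e4
    + t * (Lgen b σ g q * h3 + l3 + t * W q / 2 * l2 + t ^ 2 * W q ^ 2 / 8 * l1)
    + t ^ 2 / 2 * (Lgen b σ (Lgen b σ g) q * h2 + ll2 + t * W q / 2 * ll1)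
    + t ^ 3 * (A3 g q * h1 + a1)
end
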